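/- arXiv:2008.07136 — 6 statements merged into one kernel-verified Lean document; each statement's English description precedes it below -/
import Mathlib

section
/- Let K be a field of characteristic p containing F_q, complete with respect to a nontrivial nonarchimedean absolute value ‖·‖. Let p(X) ∈ F_q[X] be monic irreducible of degree d with pairwise distinct roots ζ_1, …, ζ_d ∈ K satisfying ‖ζ_k‖ ≤ 1. Let (c_i)_{i≥0} be a sequence in K with c_i → 0, and suppose f_0, …, f_{d−1} ∈ K satisfy Σ'_{i≥0} c_i ζ_k^i = Σ_{l=0}^{d−1} f_l ζ_k^l for every k = 1, …, d. Then for every map 𝔣 : K → K of the form 𝔣(x) = Σ_{j=0}^{m} b_j x^{q^j} with b_0, …, b_m ∈ K, one has Σ'_{i≥0} 𝔣(c_i) ζ_k^i = Σ_{l=0}^{d−1} 𝔣(f_l) ζ_k^l for every k = 1, …, d. -/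
open Filter

/-!
For every `j`, the map `τ ^ j : x ↦ x ^ q ^ j` is a continuous `F_q`-algebra endomorphism of `K`.
It permutes the finite set of roots of `P`, so applying it to the interpolation identity at a root
`y` with `τ ^ j y = x` turns that identity into the one with coefficients `τ ^ j (c i)` at `x`. The
identity for a twisted polynomial is a `K`-linear combination of these.
-/

section RootSet

open Polynomial

variable {A B : Type*} [CommRing A] [CommRing B] [IsDomain B] [Algebra A B]

theorem range_eq_rootSet_of_natDegree_le_card [IsDomain A] [Module.IsTorsionFree A B] {ι : Type*}
    {P : A[X]} (hP : P ≠ 0) {ζ : ι → B} (hζ : Function.Injective ζ)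
    (hroot : ∀ k, aeval (ζ k) P = 0) (hdeg : P.natDegree ≤ Nat.card ι) :
    Set.range ζ = P.rootSet B := by
  refine Set.eq_of_subset_of_ncard_le ?_ ?_ (P.rootSet_finite B)
  · exact Set.range_subset_iff.2 fun k ↦ mem_rootSet.2 ⟨hP, hroot k⟩
  · calc (P.rootSet B).ncard ≤ P.natDegree := ncard_rootSet_le P B
      _ ≤ Nat.card ι := hdeg
      _ = (Set.range ζ).ncard := (Set.ncard_range_of_injective hζ).symm

theorem surjOn_rootSet_of_injective (P : A[X]) {σ : B →ₐ[A] B} (hσ : Function.Injective σ) :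
    Set.SurjOn σ (P.rootSet B) (P.rootSet B) :=
  ((P.rootSet_finite B).injOn_iff_bijOn_of_mapsTo (rootSet_maps_to' id σ)).1 hσ.injOn |>.surjOn

end RootSet

section Frobenius

variable (F R : Type*) [Field F] [Fintype F] [CommRing R] [Algebra F R]

theorem frobeniusAlgHom_pow_apply (j : ℕ) (x : R) :
    (FiniteField.frobeniusAlgHom F R ^ j) x = x ^ Fintype.card F ^ j := by
  rw [AlgHom.coe_pow, FiniteField.coe_frobeniusAlgHom, pow_iterate]

theorem injective_frobeniusAlgHom_pow [IsReduced R] (j : ℕ) :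
    Function.Injective (FiniteField.frobeniusAlgHom F R ^ j) :=
  (injective_iff_map_eq_zero _).2 fun x hx ↦
    IsReduced.eq_zero x ⟨Fintype.card F ^ j, frobeniusAlgHom_pow_apply F R j x ▸ hx⟩

end Frobenius

theorem hasSum_map_mul_pow_of_surjOn {R S G : Type*} [Semiring R] [TopologicalSpace R]
    [Semiring S] [TopologicalSpace S] [FunLike G R S] [RingHomClass G R S] {σ : G}
    (hσ : Continuous σ) {s : Set R} {t : Set S} (hst : Set.SurjOn σ s t)
    {c : ℕ → R} {n : ℕ} {f : Fin n → R}
    (hf : ∀ x ∈ s, HasSum (fun i ↦ c i * x ^ i) (∑ l, f l * x ^ (l : ℕ))) :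
    ∀ y ∈ t, HasSum (fun i ↦ σ (c i) * y ^ i) (∑ l, σ (f l) * y ^ (l : ℕ)) := by
  intro y hy
  obtain ⟨x, hx, rfl⟩ := hst hy
  simpa only [Function.comp_def, map_sum, map_mul, map_pow] using (hf x hx).map σ hσ

theorem summable_mul_pow_of_norm_le_one {R : Type*} [NormedRing R] [NormOneClass R]
    [CompleteSpace R] [IsUltrametricDist R] {c : ℕ → R} (hc : Tendsto c atTop (nhds 0)) {z : R}
    (hz : ‖z‖ ≤ 1) : Summable fun i ↦ c i * z ^ i := by
  have hpow (i : ℕ) : ‖z ^ i‖ ≤ 1 := (norm_pow_le z i).trans (pow_le_one₀ (norm_nonneg z) hz)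
  apply NonarchimedeanAddGroup.summable_of_tendsto_cofinite_zero
  rw [Nat.cofinite_eq_atTop]
  exact hc.zero_mul_isBoundedUnder_le (isBoundedUnder_of ⟨1, hpow⟩)

theorem hasSum_pow_card_pow_mul_pow {F K : Type*} [Field F] [Finite F] [CommRing K] [IsDomain K]
    [Algebra F K] [TopologicalSpace K] [ContinuousMul K] (P : Polynomial F) {c : ℕ → K} {n : ℕ}
    {f : Fin n → K}
    (hf : ∀ x ∈ P.rootSet K, HasSum (fun i ↦ c i * x ^ i) (∑ l, f l * x ^ (l : ℕ))) (j : ℕ) :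
    ∀ x ∈ P.rootSet K, HasSum (fun i ↦ c i ^ Nat.card F ^ j * x ^ i)
      (∑ l, f l ^ Nat.card F ^ j * x ^ (l : ℕ)) := by
  have := Fintype.ofFinite F
  let τ := FiniteField.frobeniusAlgHom F K
  have hτ (x : K) : (τ ^ j) x = x ^ Nat.card F ^ j := by
    rw [frobeniusAlgHom_pow_apply, Nat.card_eq_fintype_card]
  have hcont : Continuous (τ ^ j) := (continuous_pow (Nat.card F ^ j)).congr fun x ↦ (hτ x).symm
  have hsurj := surjOn_rootSet_of_injective P (injective_frobeniusAlgHom_pow F K j)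
  simpa only [hτ] using hasSum_map_mul_pow_of_surjOn hcont hsurj hf

theorem stmt1_general {F K : Type*} [Field F] [Finite F] [CommRing K] [IsDomain K] [Algebra F K]
    [TopologicalSpace K] [IsTopologicalSemiring K] (P : Polynomial F) {c : ℕ → K} {n : ℕ}
    {f : Fin n → K}
    (hf : ∀ x ∈ P.rootSet K, HasSum (fun i ↦ c i * x ^ i) (∑ l, f l * x ^ (l : ℕ)))
    {m : ℕ} (b : Fin m → K) :
    ∀ x ∈ P.rootSet K, HasSum (fun i ↦ (∑ j, b j * c i ^ Nat.card F ^ (j : ℕ)) * x ^ i)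
      (∑ l, (∑ j, b j * f l ^ Nat.card F ^ (j : ℕ)) * x ^ (l : ℕ)) := by
  intro x hx
  have hcomb := hasSum_sum fun (j : Fin m) (_ : j ∈ Finset.univ) ↦
    (hasSum_pow_card_pow_mul_pow P hf j x hx).mul_left (b j)
  simp only [Finset.sum_mul, mul_assoc]
  rw [Finset.sum_comm]
  simpa only [Finset.mul_sum] using hcomb

/-- Let `K` be a complete nontrivially-valued nonarchimedean field of
characteristic `p` containing `F_q` (embedding `φ`), `P ∈ F_q[X]` monic irreducible of degree
`d` with pairwise distinct roots `ζ 1, …, ζ d ∈ K` of norm `≤ 1`. Let `(c i)` be a null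
sequence in `K` and suppose `f 0, …, f (d-1)` satisfy `∑' i, c i * ζ k ^ i = ∑ l, f l * ζ k ^ l`
for every `k`. Then for every twisted polynomial map `x ↦ ∑ j, b j * x ^ (q ^ j)` the same
interpolation holds with all coefficients replaced by their images. -/
theorem stmt1 (p e q : ℕ) [Fact p.Prime] (he : e ≠ 0) (hq : q = p ^ e)
    (K : Type*) [NontriviallyNormedField K] [CompleteSpace K] [IsUltrametricDist K]
    [CharP K p] (φ : GaloisField p e →+* K)
    (d : ℕ) (P : Polynomial (GaloisField p e))
    (hmonic : P.Monic) (hirr : Irreducible P) (hdeg : P.natDegree = d)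
    (ζ : Fin d → K) (hinj : Function.Injective ζ)
    (hroot : ∀ k, Polynomial.eval (ζ k) (P.map φ) = 0)
    (hnorm : ∀ k, ‖ζ k‖ ≤ 1)
    (c : ℕ → K) (hc : Tendsto c atTop (nhds 0))
    (f : Fin d → K)
    (hf : ∀ k, ∑' i : ℕ, c i * ζ k ^ i = ∑ l : Fin d, f l * ζ k ^ (l : ℕ))
    (m : ℕ) (b : Fin (m + 1) → K) :
    ∀ k, ∑' i : ℕ, (∑ j : Fin (m + 1), b j * c i ^ q ^ (j : ℕ)) * ζ k ^ i
        = ∑ l : Fin d, (∑ j : Fin (m + 1), b j * f l ^ q ^ (j : ℕ)) * ζ k ^ (l : ℕ) := by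
  let _ : Algebra (GaloisField p e) K := φ.toAlgebra
  have hcard : Nat.card (GaloisField p e) = q := (GaloisField.card p e he).trans hq.symm
  have haeval (k : Fin d) : Polynomial.aeval (ζ k) P = 0 :=
    (Polynomial.eval_map_algebraMap P (ζ k)).symm.trans (hroot k)
  have hrange : Set.range ζ = P.rootSet K :=
    range_eq_rootSet_of_natDegree_le_card hmonic.ne_zero hinj haeval (by simp [hdeg])
  have hsum : ∀ x ∈ P.rootSet K, HasSum (fun i ↦ c i * x ^ i) (∑ l, f l * x ^ (l : ℕ)) :=
    hrange ▸ Set.forall_mem_range.2 fun k ↦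
      (summable_mul_pow_of_norm_le_one hc (hnorm k)).hasSum_iff.2 (hf k)
  intro k
  exact hcard ▸ (stmt1_general P hsum b (ζ k) (hrange ▸ Set.mem_range_self k)).tsum_eq
end

section
/- Let K be a field of characteristic p containing F_q, complete with respect to a nontrivial nonarchimedean absolute value ‖·‖. Let 𝔭(t) ∈ F_q[t] be monic irreducible of degree d with pairwise distinct roots ζ_1, …, ζ_d ∈ K satisfying ‖ζ_k‖ ≤ 1, and let n ≥ 0. Let F : K → K be given by F(x) = Σ_{j=0}^{s} b_j x^{q^j} with b_0, …, b_s ∈ K. Let (h_i)_{i≥0} ⊆ K with h_i → 0, and suppose that Σ_{i≥0} F(h_i) t^i = 𝔭(t)^{n+1} · Σ_{i≥0} h_i t^i as formal power series in K[[t]] (where 𝔭(t)^{n+1} has coefficients in F_q ⊆ K). If c_0, …, c_{d−1} ∈ K satisfy Σ'_{i≥n} C(i,n) h_i ζ_k^{i−n} = Σ_{l=0}^{d−1} c_l ζ_k^l for every k = 1, …, d, then F(c_l) = 0 for every l = 0, …, d−1. -/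
open Filter

/-
Write `⟨L, h⟩ = ∑ L(tⁱ) hᵢ` for a `k`-linear functional `L` on `k[t]`. Such sums commute with
continuous `k`-linear maps, and multiplying the series `∑ hᵢ tⁱ` by a polynomial amounts to
precomposing `L` with that multiplication. Interpolation at the roots of `P` is reduction modulo
`P`: by Vandermonde, `c l = ⟨L_l, h⟩`, where `L_l f` is the coefficient of `t^l` in the remainder
of `f^{(n)}` modulo `P`. By the Leibniz rule `P` divides the `n`-th hyperderivative of every
multiple of `P^(n+1)`, so `L_l` kills these multiples and
`F (c l) = ⟨L_l, F ∘ h⟩ = ⟨L_l, P^(n+1) · h⟩ = ⟨L_l ∘ P^(n+1), h⟩ = 0`.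
-/

theorem summable_mul_of_norm_le_of_tendsto_zero {ι R : Type*} [NonUnitalNormedRing R]
    [CompleteSpace R] [IsUltrametricDist R] {u h : ι → R} {C : ℝ} (hu : ∀ i, ‖u i‖ ≤ C)
    (hh : Tendsto h cofinite (nhds 0)) : Summable fun i => u i * h i :=
  NonarchimedeanAddGroup.summable_of_tendsto_cofinite_zero <|
    isBoundedUnder_le_mul_tendsto_zero (isBoundedUnder_of ⟨C, hu⟩) hh

theorem hasSum_nat_add_iff_of_forall_lt_eq_zero {M : Type*} [AddCommMonoid M]
    [TopologicalSpace M] {f : ℕ → M} {n : ℕ} {a : M} (hf : ∀ i < n, f i = 0) :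
    HasSum (fun i => f (i + n)) a ↔ HasSum f a :=
  (add_left_injective n).hasSum_iff fun i hi =>
    hf i (not_le.mp fun hle => hi ⟨i - n, Nat.sub_add_cancel hle⟩)

section FiniteField

variable (k : Type*) [Field k]

theorem norm_algebraMap_le_one_of_finite [Finite k] {K : Type*} [NormedDivisionRing K]
    [Algebra k K] (a : k) : ‖algebraMap k K a‖ ≤ 1 := by
  rcases eq_or_ne a 0 with rfl | ha
  · simp
  · exact ((algebraMap k K : k →* K).isOfFinOrder ha.isUnit.isOfFinOrder).norm_eq_one.le

variable [Fintype k] {K : Type*} [CommRing K] [Algebra k K] [TopologicalSpace K]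

/-- The Frobenius `x ↦ x ^ q` of the field `k` with `q` elements, as a continuous `k`-linear map
on a topological `k`-algebra. -/
def frobeniusCLM [ContinuousMul K] : K →L[k] K :=
  ⟨(FiniteField.frobeniusAlgHom k K).toLinearMap, continuous_pow _⟩

theorem coe_frobeniusCLM [ContinuousMul K] :
    ⇑(frobeniusCLM k : K →L[k] K) = (· ^ Fintype.card k) := rfl

/-- The additive polynomial function `x ↦ ∑ bⱼ x^(qʲ)`, where `q` is the number of elements of
the finite field `k`, as a continuous `k`-linear map. -/
def additivePolynomialMap [IsTopologicalRing K] {s : ℕ} (b : Fin s → K) : K →L[k] K :=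
  ∑ j : Fin s, b j • frobeniusCLM k ^ (j : ℕ)

theorem additivePolynomialMap_apply [IsTopologicalRing K] {s : ℕ} (b : Fin s → K) (x : K) :
    additivePolynomialMap k b x = ∑ j : Fin s, b j * x ^ Fintype.card k ^ (j : ℕ) := by
  simp [additivePolynomialMap, coe_frobeniusCLM, pow_iterate]

end FiniteField

section HasseDeriv

open Polynomial

theorem pow_sub_dvd_hasseDeriv_of_pow_dvd {R : Type*} [CommSemiring R] {P f : R[X]} {N : ℕ}
    (hf : P ^ N ∣ f) (n : ℕ) : P ^ (N - n) ∣ hasseDeriv n f := by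
  induction N generalizing f n with
  | zero => simp
  | succ N ih =>
    obtain ⟨g, rfl⟩ := hf
    rw [pow_succ', mul_assoc, hasseDeriv_mul]
    refine Finset.dvd_sum fun ⟨i, j⟩ hij => ?_
    obtain rfl : i + j = n := Finset.HasAntidiagonal.mem_antidiagonal.mp hij
    have hj : P ^ (N - j) ∣ hasseDeriv j (P ^ N * g) := ih (dvd_mul_right _ _) j
    rcases i with _ | i
    · rw [hasseDeriv_zero']
      exact (pow_dvd_pow P (by lia)).trans (pow_succ' P (N - j) ▸ mul_dvd_mul_left P hj)
    · exact ((pow_dvd_pow P (by lia)).trans hj).mul_left _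

variable {R : Type*} [CommRing R]

theorem aeval_hasseDeriv_X_pow {A : Type*} [Semiring A] [Algebra R A] (x : A) (n i : ℕ) :
    aeval x (hasseDeriv n (X ^ i : R[X])) = (i.choose n : A) * x ^ (i - n) := by
  simp [← monomial_one_right_eq_X_pow, hasseDeriv_monomial, aeval_monomial]

theorem aeval_eq_sum_modByMonic_coeff {A : Type*} [Ring A] [Algebra R A] {P : R[X]}
    (hP : P.Monic) {x : A} (hx : aeval x P = 0) (f : R[X]) :
    aeval x f = ∑ l : Fin P.natDegree, (f %ₘ P).coeff l • x ^ (l : ℕ) := by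
  rw [← aeval_modByMonic_eq_self_of_root hx]
  conv_lhs => rw [← sum_modByMonic_coeff hP degree_le_natDegree]
  simp only [map_sum, aeval_monomial, Algebra.smul_def]

/-- The functional `L_l` of interpolation: the coefficient of `X ^ l` in the remainder of the
`n`-th hyperderivative of a polynomial modulo `P`, meant for monic `P`. -/
noncomputable def hasseResidueCoeff (P : R[X]) (n l : ℕ) : R[X] →ₗ[R] R :=
  lcoeff R l ∘ₗ modByMonicHom P ∘ₗ hasseDeriv n

theorem hasseResidueCoeff_apply (P : R[X]) (n l : ℕ) (f : R[X]) :
    hasseResidueCoeff P n l f = (hasseDeriv n f %ₘ P).coeff l := rfl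

theorem hasseResidueCoeff_comp_mulLeft_pow {P : R[X]} (hP : P.Monic) (n l : ℕ) :
    hasseResidueCoeff P n l ∘ₗ LinearMap.mulLeft R (P ^ (n + 1)) = 0 := by
  refine LinearMap.ext fun f => ?_
  have hdvd : P ∣ hasseDeriv n (P ^ (n + 1) * f) := by
    simpa using pow_sub_dvd_hasseDeriv_of_pow_dvd (dvd_mul_right (P ^ (n + 1)) f) n
  simp [hasseResidueCoeff_apply, (modByMonic_eq_zero_iff_dvd hP).mpr hdvd]

end HasseDeriv

section DualPairing

open Polynomial

/-- The pairing `∑ L(Xⁱ) hᵢ` of a functional on polynomials with the coefficient sequence of a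
power series. It is meant for sequences all of whose rescalings by scalars are summable. -/
noncomputable def dualPairing {k M : Type*} [CommSemiring k] [AddCommMonoid M] [Module k M]
    [TopologicalSpace M] (L : k[X] →ₗ[k] k) (h : ℕ → M) : M :=
  ∑' i, L (X ^ i) • h i

theorem hasSum_dualPairing {k M : Type*} [CommSemiring k] [AddCommMonoid M] [Module k M]
    [TopologicalSpace M] {h : ℕ → M} (hh : ∀ a : ℕ → k, Summable fun i => a i • h i)
    (L : k[X] →ₗ[k] k) : HasSum (fun i => L (X ^ i) • h i) (dualPairing L h) :=
  (hh _).hasSum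

theorem map_dualPairing {k M N : Type*} [CommSemiring k] [AddCommMonoid M] [Module k M]
    [TopologicalSpace M] [AddCommMonoid N] [Module k N] [TopologicalSpace N] [T2Space N]
    (F : M →L[k] N) (L : k[X] →ₗ[k] k) {h : ℕ → M}
    (hh : ∀ a : ℕ → k, Summable fun i => a i • h i) :
    F (dualPairing L h) = dualPairing L (F ∘ h) := by
  simp only [dualPairing, F.map_tsum (hh _), map_smul, Function.comp_apply]

variable {k K : Type*} [CommRing k] [CommRing K] [Algebra k K] [TopologicalSpace K]

theorem hasSum_smul_coeff_coe_mul [ContinuousAdd K] [T2Space K] {h : ℕ → K}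
    (hh : ∀ a : ℕ → k, Summable fun i => a i • h i) (L : k[X] →ₗ[k] k) (Q : k[X]) :
    HasSum (fun i => L (X ^ i) • PowerSeries.coeff i
        ((Q.map (algebraMap k K) : PowerSeries K) * PowerSeries.mk h))
      (dualPairing (L ∘ₗ LinearMap.mulLeft k Q) h) := by
  induction Q using Polynomial.induction_on' with
  | add Q₁ Q₂ h₁ h₂ =>
    have hadd : dualPairing (L ∘ₗ LinearMap.mulLeft k (Q₁ + Q₂)) h =
        dualPairing (L ∘ₗ LinearMap.mulLeft k Q₁) h +
          dualPairing (L ∘ₗ LinearMap.mulLeft k Q₂) h := by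
      simp only [dualPairing, LinearMap.comp_apply, LinearMap.mulLeft_apply, add_mul, map_add,
        add_smul, (hh _).tsum_add (hh _)]
    simpa only [hadd, Polynomial.map_add, coe_add, add_mul, map_add, smul_add] using h₁.add h₂
  | monomial m a =>
    have hcoeff (i : ℕ) : PowerSeries.coeff i
        (((monomial m a).map (algebraMap k K) : PowerSeries K) * PowerSeries.mk h) =
          if m ≤ i then a • h (i - m) else 0 := by
      rw [map_monomial, coe_monomial, PowerSeries.monomial_eq_C_mul_X_pow, mul_assoc,
        PowerSeries.coeff_C_mul, PowerSeries.coeff_X_pow_mul']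
      simp [Algebra.smul_def]
    simp only [hcoeff]
    refine (hasSum_nat_add_iff_of_forall_lt_eq_zero (n := m) fun i hi => by simp [hi.not_ge]).mp ?_
    convert hasSum_dualPairing hh (L ∘ₗ LinearMap.mulLeft k (monomial m a)) using 2 with i
    have hmul : monomial m a * X ^ i = a • X ^ (i + m) := by
      rw [← C_mul_X_pow_eq_monomial, mul_assoc, ← pow_add, add_comm m, smul_eq_C_mul]
    simp [hmul, smul_smul, mul_comm]

theorem dualPairing_coeff_coe_mul [ContinuousAdd K] [T2Space K] {h : ℕ → K}
    (hh : ∀ a : ℕ → k, Summable fun i => a i • h i) (L : k[X] →ₗ[k] k) (Q : k[X]) :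
    dualPairing L (fun i => PowerSeries.coeff i
        ((Q.map (algebraMap k K) : PowerSeries K) * PowerSeries.mk h)) =
      dualPairing (L ∘ₗ LinearMap.mulLeft k Q) h :=
  (hasSum_smul_coeff_coe_mul hh L Q).tsum_eq

theorem tsum_choose_mul_pow_eq_sum_dualPairing [IsTopologicalRing K] [T2Space K] {P : k[X]}
    (hP : P.Monic) {x : K} (hx : aeval x P = 0) {h : ℕ → K}
    (hh : ∀ a : ℕ → k, Summable fun i => a i • h i) (n : ℕ) :
    ∑' i : ℕ, ((i + n).choose n : K) * h (i + n) * x ^ i =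
      ∑ l : Fin P.natDegree, dualPairing (hasseResidueCoeff P n l) h * x ^ (l : ℕ) := by
  have hsum : HasSum
      (fun i => ∑ l : Fin P.natDegree, hasseResidueCoeff P n l (X ^ i) • h i * x ^ (l : ℕ))
      (∑ l : Fin P.natDegree, dualPairing (hasseResidueCoeff P n l) h * x ^ (l : ℕ)) :=
    hasSum_sum fun l _ => (hasSum_dualPairing hh _).mul_right _
  have hterm (i : ℕ) :
      ∑ l : Fin P.natDegree, hasseResidueCoeff P n l (X ^ i) • h i * x ^ (l : ℕ) =
        (i.choose n : K) * h i * x ^ (i - n) := by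
    rw [mul_right_comm, ← aeval_hasseDeriv_X_pow (R := k), aeval_eq_sum_modByMonic_coeff hP hx,
      Finset.sum_mul]
    simp only [hasseResidueCoeff_apply, smul_mul_assoc, mul_comm (h i)]
  simp only [hterm] at hsum
  rw [← hasSum_nat_add_iff_of_forall_lt_eq_zero (n := n)
    fun i hi => by simp [Nat.choose_eq_zero_of_lt hi]] at hsum
  simpa only [Nat.add_sub_cancel] using hsum.tsum_eq

theorem eq_dualPairing_of_interpolates [IsDomain K] [IsTopologicalRing K] [T2Space K] {P : k[X]}
    (hP : P.Monic) {ζ : Fin P.natDegree → K} (hinj : Function.Injective ζ)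
    (hroot : ∀ j, aeval (ζ j) P = 0) {h : ℕ → K}
    (hh : ∀ a : ℕ → k, Summable fun i => a i • h i) (n : ℕ) {c : Fin P.natDegree → K}
    (hc : ∀ j, ∑' i : ℕ, ((i + n).choose n : K) * h (i + n) * ζ j ^ i =
      ∑ l : Fin P.natDegree, c l * ζ j ^ (l : ℕ)) (l : Fin P.natDegree) :
    c l = dualPairing (hasseResidueCoeff P n l) h := by
  have hzero : c - (fun l : Fin P.natDegree => dualPairing (hasseResidueCoeff P n l) h) = 0 := by
    refine Matrix.eq_zero_of_forall_index_sum_mul_pow_eq_zero hinj fun j => ?_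
    simp only [Pi.sub_apply, sub_mul, Finset.sum_sub_distrib, ← hc,
      tsum_choose_mul_pow_eq_sum_dualPairing hP (hroot j) hh, sub_self]
  exact congrFun (sub_eq_zero.mp hzero) l

theorem stmt7_general [IsDomain K] [IsTopologicalRing K] [T2Space K] (P : k[X]) (hP : P.Monic)
    (ζ : Fin P.natDegree → K) (hinj : Function.Injective ζ) (hroot : ∀ j, aeval (ζ j) P = 0)
    (n : ℕ) (F : K →L[k] K) (h : ℕ → K) (hh : ∀ a : ℕ → k, Summable fun i => a i • h i)
    (heq : PowerSeries.mk (fun i => F (h i)) =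
      (P.map (algebraMap k K) : PowerSeries K) ^ (n + 1) * PowerSeries.mk h)
    (c : Fin P.natDegree → K)
    (hc : ∀ j, ∑' i : ℕ, ((i + n).choose n : K) * h (i + n) * ζ j ^ i =
      ∑ l : Fin P.natDegree, c l * ζ j ^ (l : ℕ)) (l : Fin P.natDegree) :
    F (c l) = 0 := by
  have hFh : F ∘ h = fun i => PowerSeries.coeff i
      (((P ^ (n + 1)).map (algebraMap k K) : PowerSeries K) * PowerSeries.mk h) := by
    funext i
    rw [Polynomial.map_pow, coe_pow, ← heq, PowerSeries.coeff_mk, Function.comp_apply]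
  calc F (c l)
    _ = F (dualPairing (hasseResidueCoeff P n l) h) := by
      rw [← eq_dualPairing_of_interpolates hP hinj hroot hh n hc l]
    _ = dualPairing (hasseResidueCoeff P n l) (F ∘ h) := map_dualPairing F _ hh
    _ = dualPairing (hasseResidueCoeff P n l ∘ₗ LinearMap.mulLeft k (P ^ (n + 1))) h := by
      rw [hFh, dualPairing_coeff_coe_mul hh]
    _ = 0 := by
      simp only [hasseResidueCoeff_comp_mulLeft_pow hP, dualPairing, LinearMap.zero_apply,
        zero_smul, tsum_zero]

end DualPairing

/-- Let `K` be a complete nontrivially-valued nonarchimedean field of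
characteristic `p` containing `F_q` (embedding `φ`).  Let `P ∈ F_q[t]` be monic irreducible
of degree `d` with pairwise distinct roots `ζ 1, …, ζ d ∈ K` of norm `≤ 1`, and `n ≥ 0`.
Let `F x = ∑_{j ≤ s} b j * x ^ (q ^ j)` and let `(h i)` be a null sequence with
`∑ F(h i) t^i = P(t)^{n+1} * ∑ h i t^i` in `K[[t]]`.  If `c 0, …, c (d-1)` interpolate the
values at the roots of the `n`-th hyperderivative, then `F (c l) = 0` for all `l`. -/
theorem stmt7 (p e q : ℕ) [Fact p.Prime] (he : e ≠ 0) (hq : q = p ^ e)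
    (K : Type*) [NontriviallyNormedField K] [CompleteSpace K] [IsUltrametricDist K]
    [CharP K p] (φ : GaloisField p e →+* K)
    (d : ℕ) (P : Polynomial (GaloisField p e))
    (hmonic : P.Monic) (hirr : Irreducible P) (hdeg : P.natDegree = d)
    (ζ : Fin d → K) (hinj : Function.Injective ζ)
    (hroot : ∀ k, Polynomial.eval (ζ k) (P.map φ) = 0)
    (hnormζ : ∀ k, ‖ζ k‖ ≤ 1)
    (n s : ℕ) (b : Fin (s + 1) → K)
    (F : K → K) (hF : ∀ x, F x = ∑ j : Fin (s + 1), b j * x ^ q ^ (j : ℕ))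
    (h : ℕ → K) (hh : Tendsto h atTop (nhds 0))
    (heq : PowerSeries.mk (fun i => F (h i))
        = (↑(P.map φ) : PowerSeries K) ^ (n + 1) * PowerSeries.mk h)
    (c : Fin d → K)
    (hc : ∀ k, ∑' i : ℕ, ((i + n).choose n : K) * h (i + n) * ζ k ^ i
        = ∑ l : Fin d, c l * ζ k ^ (l : ℕ)) :
    ∀ l, F (c l) = 0 := by
  subst hdeg
  let : Algebra (GaloisField p e) K := φ.toAlgebra
  let := Fintype.ofFinite (GaloisField p e)
  have hcard : Fintype.card (GaloisField p e) = q := by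
    rw [← Nat.card_eq_fintype_card, GaloisField.card p e he, hq]
  obtain rfl : F = additivePolynomialMap (GaloisField p e) b :=
    funext fun x => by rw [hF, additivePolynomialMap_apply, hcard]
  have hsum (a : ℕ → GaloisField p e) : Summable fun i => a i • h i :=
    summable_mul_of_norm_le_of_tendsto_zero
      (fun i => norm_algebraMap_le_one_of_finite _ (a i)) (Nat.cofinite_eq_atTop ▸ hh)
  exact stmt7_general P hmonic ζ hinj
    (fun j => (Polynomial.eval_map_algebraMap P (ζ j)).symm.trans (hroot j)) n _ h hsum heq c hc
end

section
/- Let K be a field of characteristic p containing F_q, complete with respect to a nontrivial nonarchimedean absolute value ‖·‖, let θ ∈ K with ‖θ‖ > 1, and let (c_m)_{m≥0} ⊆ K be a sequence with ‖c_m‖ · ‖θ‖^{−q^m} → 0 as m → ∞. Then for each i ≥ 0 the sum h_i := Σ'_{m≥0} c_m θ^{−(i+1)q^m} converges, the sequence (h_i) tends to 0, and for every z ∈ K with ‖z‖ ≤ 1 and every n ≥ 0 one has Σ'_{i≥n} C(i,n) h_i z^{i−n} = Σ'_{m≥0} c_m (θ^{q^m} − z)^{−(n+1)}. In particular (n = 0),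 Σ'_{i≥0} h_i z^i = Σ'_{m≥0} c_m (θ^{q^m} − z)^{−1}. -/
open Filter

/-!
Expanding each term of `∑ₘ cₘ (aₘ - z)^{-(n+1)}` as a power series in `z / aₘ` produces a double
series indexed by `ℕ × ι`. If `‖aₘ‖ ≥ R > ‖z‖` and `cₘ / aₘ → 0`, its terms are dominated by a
constant times `(‖z‖ / R)^i * ‖cₘ / aₘ‖`, the binomial coefficients having norm at most `1`. In a
complete ultrametric field the double series is therefore summable, and the two iterated sums agree.
Pellarin's identity is the case `aₘ = θ^{q^m}`.
-/

theorem hasSum_choose_mul_inv_pow_mul_pow {K : Type*} [NormedField K] {a z : K}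
    (hz : ‖z‖ < ‖a‖) (c : K) (n : ℕ) :
    HasSum (fun i : ℕ => ((i + n).choose n : K) * (c * (a ^ (i + n + 1))⁻¹) * z ^ i)
      (c * ((a - z) ^ (n + 1))⁻¹) := by
  have ha : a ≠ 0 := norm_pos_iff.1 ((norm_nonneg z).trans_lt hz)
  have hratio : ‖z / a‖ < 1 := by
    rwa [norm_div, div_lt_one (norm_pos_iff.2 ha)]
  have hgeom := (hasSum_choose_mul_geometric_of_norm_lt_one n hratio).mul_left
    (c * (a ^ (n + 1))⁻¹)
  have hvalue : c * (a ^ (n + 1))⁻¹ * (1 / (1 - z / a) ^ (n + 1)) = c * ((a - z) ^ (n + 1))⁻¹ := by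
    rw [one_div, mul_assoc, ← mul_inv, ← mul_pow, mul_one_sub, mul_div_cancel₀ z ha]
  rw [hvalue] at hgeom
  refine hgeom.congr_fun fun i => ?_
  rw [div_pow, add_assoc, pow_add]
  ring

section Ultrametric

variable {K : Type*} [NormedField K] [IsUltrametricDist K] {R : ℝ}

theorem norm_choose_mul_inv_pow_mul_pow_le (hR : 0 < R) {a : K} (ha : R ≤ ‖a‖) (c z : K)
    (n i : ℕ) :
    ‖((i + n).choose n : K) * (c * (a ^ (i + n + 1))⁻¹) * z ^ i‖ ≤
      (R ^ n)⁻¹ * ((‖z‖ / R) ^ i * ‖c / a‖) := by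
  have hchoose : ‖((i + n).choose n : K)‖ ≤ 1 := IsUltrametricDist.norm_natCast_le_one K _
  calc ‖((i + n).choose n : K) * (c * (a ^ (i + n + 1))⁻¹) * z ^ i‖
      = ‖((i + n).choose n : K)‖ * ((‖a‖ ^ n)⁻¹ * ((‖z‖ / ‖a‖) ^ i * ‖c / a‖)) := by
        simp only [norm_mul, norm_inv, norm_pow, norm_div, div_pow, pow_succ, pow_add]
        ring
    _ ≤ 1 * ((R ^ n)⁻¹ * ((‖z‖ / R) ^ i * ‖c / a‖)) := by gcongr
    _ = (R ^ n)⁻¹ * ((‖z‖ / R) ^ i * ‖c / a‖) := one_mul _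

variable [CompleteSpace K] {ι : Type*} {a c : ι → K} {z : K}

theorem summable_prod_choose_mul_inv_pow_mul_pow (ha : ∀ m, R ≤ ‖a m‖)
    (hc : Tendsto (fun m => c m / a m) cofinite (nhds 0)) (hz : ‖z‖ < R) (n : ℕ) :
    Summable fun x : ℕ × ι =>
      ((x.1 + n).choose n : K) * (c x.2 * (a x.2 ^ (x.1 + n + 1))⁻¹) * z ^ x.1 := by
  have hR : 0 < R := (norm_nonneg z).trans_lt hz
  have hgeom : Tendsto (fun i : ℕ => (‖z‖ / R) ^ i) cofinite (nhds 0) := by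
    rw [Nat.cofinite_eq_atTop]
    exact tendsto_pow_atTop_nhds_zero_of_lt_one (by positivity) ((div_lt_one hR).2 hz)
  have hbound := (tendsto_mul_cofinite_nhds_zero hgeom
    (tendsto_zero_iff_norm_tendsto_zero.1 hc)).const_mul (R ^ n)⁻¹
  rw [mul_zero] at hbound
  exact NonarchimedeanAddGroup.summable_of_tendsto_cofinite_zero <|
    squeeze_zero_norm (fun x => norm_choose_mul_inv_pow_mul_pow_le hR (ha x.2) _ _ _ _) hbound

theorem summable_mul_inv_pow_succ (hR : 0 < R) (ha : ∀ m, R ≤ ‖a m‖)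
    (hc : Tendsto (fun m => c m / a m) cofinite (nhds 0)) (n : ℕ) :
    Summable fun m => c m * (a m ^ (n + 1))⁻¹ := by
  simpa using (summable_prod_choose_mul_inv_pow_mul_pow ha hc (z := 0) (by simpa) n).prod_factor 0

theorem summable_mul_inv_sub_pow_succ (ha : ∀ m, R ≤ ‖a m‖)
    (hc : Tendsto (fun m => c m / a m) cofinite (nhds 0)) (hz : ‖z‖ < R) (n : ℕ) :
    Summable fun m => c m * ((a m - z) ^ (n + 1))⁻¹ :=
  (summable_prod_choose_mul_inv_pow_mul_pow ha hc hz n).prod_symm.prod.congr fun m =>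
    (hasSum_choose_mul_inv_pow_mul_pow (hz.trans_le (ha m)) (c m) n).tsum_eq

theorem hasSum_choose_mul_tsum_inv_pow_mul_pow (ha : ∀ m, R ≤ ‖a m‖)
    (hc : Tendsto (fun m => c m / a m) cofinite (nhds 0)) (hz : ‖z‖ < R) (n : ℕ) :
    HasSum (fun i : ℕ => ((i + n).choose n : K) * (∑' m, c m * (a m ^ (i + n + 1))⁻¹) * z ^ i)
      (∑' m, c m * ((a m - z) ^ (n + 1))⁻¹) := by
  have hR : 0 < R := (norm_nonneg z).trans_lt hz
  have hdouble := (summable_prod_choose_mul_inv_pow_mul_pow ha hc hz n).hasSum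
  have hcols := ((Equiv.prodComm ι ℕ).hasSum_iff.2 hdouble).prod_fiberwise fun m =>
    hasSum_choose_mul_inv_pow_mul_pow (hz.trans_le (ha m)) (c m) n
  rw [hcols.tsum_eq]
  exact hdouble.prod_fiberwise fun i =>
    ((summable_mul_inv_pow_succ hR ha hc (i + n)).hasSum.mul_left _).mul_right _

theorem tendsto_tsum_inv_pow_succ_mul_pow (ha : ∀ m, R ≤ ‖a m‖)
    (hc : Tendsto (fun m => c m / a m) cofinite (nhds 0)) (hz : ‖z‖ < R) :
    Tendsto (fun i : ℕ => (∑' m, c m * (a m ^ (i + 1))⁻¹) * z ^ i) atTop (nhds 0) := by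
  simpa using (hasSum_choose_mul_tsum_inv_pow_mul_pow ha hc hz 0).summable.tendsto_atTop_zero

theorem stmt9_general (hR : 1 < R) (ha : ∀ m, R ≤ ‖a m‖)
    (hc : Tendsto (fun m => c m / a m) cofinite (nhds 0)) :
    (∀ i : ℕ, Summable fun m => c m * (a m ^ (i + 1))⁻¹) ∧
    Tendsto (fun i : ℕ => ∑' m, c m * (a m ^ (i + 1))⁻¹) atTop (nhds 0) ∧
    ∀ z : K, ‖z‖ < R → ∀ n : ℕ,
      Summable (fun m => c m * ((a m - z) ^ (n + 1))⁻¹) ∧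
      HasSum (fun i : ℕ => ((i + n).choose n : K) * (∑' m, c m * (a m ^ (i + n + 1))⁻¹) * z ^ i)
        (∑' m, c m * ((a m - z) ^ (n + 1))⁻¹) :=
  ⟨summable_mul_inv_pow_succ (one_pos.trans hR) ha hc,
    by simpa using tendsto_tsum_inv_pow_succ_mul_pow ha hc (z := 1) (by simpa),
    fun _ hz n => ⟨summable_mul_inv_sub_pow_succ ha hc hz n,
      hasSum_choose_mul_tsum_inv_pow_mul_pow ha hc hz n⟩⟩

end Ultrametric

/-- **Pellarin's identity and its hyperderivatives.** Let `K` be a complete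
nontrivially-valued nonarchimedean field of characteristic `p` containing `F_q`
(embedding `φ`), `q = p ^ e`, let `θ ∈ K` with `‖θ‖ > 1`, and `(c m)` a sequence with
`‖c m‖ * ‖θ‖^{-q^m} → 0`.  Then each `h i := ∑'_m c m * θ^{-(i+1) q^m}` converges, `h i → 0`,
and for every `‖z‖ ≤ 1` and `n ≥ 0`:
`∑'_{i} C(i+n,n) h_{i+n} z^i = ∑'_m c m * (θ^{q^m} - z)^{-(n+1)}`
(the case `n = 0` being `∑'_i h_i z^i = ∑'_m c_m (θ^{q^m} - z)⁻¹`). -/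
theorem stmt9 (p e q : ℕ) [Fact p.Prime] (he : e ≠ 0) (hq : q = p ^ e)
    (K : Type*) [NontriviallyNormedField K] [CompleteSpace K] [IsUltrametricDist K]
    [CharP K p] (φ : GaloisField p e →+* K)
    (θ : K) (hθ : 1 < ‖θ‖)
    (c : ℕ → K)
    (hc : Tendsto (fun m : ℕ => ‖c m‖ * (‖θ‖ ^ q ^ m)⁻¹) atTop (nhds 0)) :
    (∀ i : ℕ, Summable fun m : ℕ => c m * (θ ^ ((i + 1) * q ^ m))⁻¹) ∧
    Tendsto (fun i : ℕ => ∑' m : ℕ, c m * (θ ^ ((i + 1) * q ^ m))⁻¹) atTop (nhds 0) ∧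
    ∀ z : K, ‖z‖ ≤ 1 → ∀ n : ℕ,
      ∑' i : ℕ, ((i + n).choose n : K)
          * (∑' m : ℕ, c m * (θ ^ ((i + n + 1) * q ^ m))⁻¹) * z ^ i
        = ∑' m : ℕ, c m * ((θ ^ q ^ m - z) ^ (n + 1))⁻¹ := by
  have hq0 : q ≠ 0 := hq ▸ pow_ne_zero e (Fact.out : p.Prime).ne_zero
  have ha (m : ℕ) : ‖θ‖ ≤ ‖θ ^ q ^ m‖ :=
    (le_self_pow₀ hθ.le (pow_ne_zero m hq0)).trans_eq (norm_pow θ _).symm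
  have hca : Tendsto (fun m => c m / θ ^ q ^ m) cofinite (nhds 0) := by
    rw [Nat.cofinite_eq_atTop, tendsto_zero_iff_norm_tendsto_zero]
    simpa only [norm_div, norm_pow, ← div_eq_mul_inv] using hc
  obtain ⟨hsum, hlim, hid⟩ := stmt9_general hθ ha hca
  simp only [pow_mul']
  exact ⟨hsum, hlim, fun z hz n => (hid z (hz.trans_lt hθ) n).2.tsum_eq⟩
end

section
/- Let 𝔭 ∈ F_q[θ] be monic irreducible of degree d and let n ≥ 0. Let g ∈ (F_q[θ])[T] be the unique polynomial with (θ − T)·g = 𝔭(θ) − 𝔭(T), where 𝔭(θ) is regarded as a constant polynomial in T and 𝔭(T) is 𝔭 with T substituted for θ. Let r_n ∈ (F_q[θ])[T] be the remainder of g^{n+1} upon division by the (T-)monic polynomial 𝔭(T), and write r_n = Σ_{l=0}^{d−1} q_{n,l}(θ) T^l with q_{n,l} ∈ F_q[θ]. Then the images of q_{n,0}, …, q_{n,d−1} in the quotient field F_q[θ]/(𝔭) form an F_q-basis of F_q[θ]/(𝔭) (an F_q-vector space of dimension d). -/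
/-!
Let `a` be the class of `θ` in `S = R[θ]/(P)`. Modulo `P(θ)` the divided difference `g` becomes
`G = P(T)/(T - a)`, whose coefficients are triangular in the powers of `a` and hence span `S`.
Since `P(T) = (T - a) G`, multiplying `G` by a polynomial `H` modulo `P(T)` amounts to multiplying
it by the constant `H(a)`. As `G(a) = P'(a)`, the remainder of `G ^ (n + 1)` is `P'(a) ^ n • G`, and
`P'(a)` is a unit because `P` is separable. So the `deg P` coefficients of the remainder span the
free module `S` of rank `deg P`, and therefore form a basis.
-/

section

open Polynomial

lemma mul_modByMonic_mul_left {R : Type*} [Ring R] {p r : R[X]} (hp : p.Monic) (hr : r.Monic)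
    (q : R[X]) : (p * q) %ₘ (p * r) = p * (q %ₘ r) := by
  nontriviality R
  refine (div_modByMonic_unique (q /ₘ r) _ (hp.mul hr) ⟨?_, ?_⟩).2
  · rw [mul_assoc, ← mul_add, modByMonic_add_div]
  · rw [hp.degree_mul_comm, hp.degree_mul_comm, hp.degree_mul, hp.degree_mul]
    exact WithBot.add_lt_add_right (degree_ne_bot.2 hp.ne_zero) (degree_modByMonic_lt q hr)

lemma degree_map_modByMonic_lt {R S : Type*} [Ring R] [Nontrivial R] [Ring S] (φ : R →+* S)
    (p : R[X]) {q : R[X]} (hq : q.Monic) : ((p %ₘ q).map φ).degree < q.natDegree :=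
  calc ((p %ₘ q).map φ).degree ≤ (p %ₘ q).degree := degree_map_le
    _ < q.degree := degree_modByMonic_lt p hq
    _ ≤ q.natDegree := degree_le_natDegree

lemma span_range_fin_coeff (R : Type*) {S : Type*} [Semiring R] [Semiring S] [Module R S]
    {f : S[X]} {d : ℕ} (hf : f.degree < d) :
    Submodule.span R (Set.range fun l : Fin d => f.coeff l) =
      Submodule.span R (Set.range f.coeff) := by
  refine le_antisymm (Submodule.span_mono ?_) (Submodule.span_le.2 ?_)
  · rintro _ ⟨l, rfl⟩
    exact ⟨l, rfl⟩
  · rintro _ ⟨l, rfl⟩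
    obtain hl | hl := lt_or_ge l d
    · exact Submodule.subset_span ⟨⟨l, hl⟩, rfl⟩
    · rw [coeff_eq_zero_of_degree_lt (hf.trans_le (by exact_mod_cast hl))]
      exact Submodule.zero_mem _

lemma span_range_const_mul_eq_top {R S ι : Type*} [CommSemiring R] [Semiring S] [Algebra R S]
    {c : S} (hc : IsUnit c) {v : ι → S} (hv : Submodule.span R (Set.range v) = ⊤) :
    Submodule.span R (Set.range fun i => c * v i) = ⊤ := by
  have hrange : (Set.range fun i => c * v i) = LinearMap.mulLeft R c '' Set.range v :=
    Set.range_comp _ v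
  rw [hrange, ← Submodule.map_span, hv, Submodule.map_top, LinearMap.range_eq_top]
  exact hc.unit.mulLeft.surjective

lemma isUnit_aeval_derivative_of_separable {R S : Type*} [CommSemiring R] [CommSemiring S]
    [Algebra R S] {P : R[X]} (hP : P.Separable) {a : S} (ha : aeval a P = 0) :
    IsUnit (aeval a (derivative P)) := by
  have hcoprime : IsCoprime (aeval a P) (aeval a (derivative P)) :=
    IsCoprime.map hP (aeval a).toRingHom
  rwa [ha, isCoprime_zero_left] at hcoprime

variable {R S : Type*} [CommRing R] [CommRing S] [Algebra R S]

lemma minpolyDiv_pow_succ_modByMonic {a : S} (ha : IsIntegral R a) (n : ℕ) :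
    minpolyDiv R a ^ (n + 1) %ₘ (minpoly R a).map (algebraMap R S) =
      C (aeval a (derivative (minpoly R a)) ^ n) * minpolyDiv R a := by
  rw [pow_succ', ← minpolyDiv_spec,
    mul_modByMonic_mul_left (minpolyDiv_monic ha) (monic_X_sub_C a), modByMonic_X_sub_C_eq_C_eval,
    eval_pow, eval_minpolyDiv_self, mul_comm]

lemma span_range_coeff_minpolyDiv_pow_succ_modByMonic_eq_top {a : S} (ha : IsIntegral R a)
    (hadjoin : Algebra.adjoin R {a} = ⊤)
    (hunit : IsUnit (aeval a (derivative (minpoly R a)))) (n : ℕ) :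
    Submodule.span R (Set.range
      (minpolyDiv R a ^ (n + 1) %ₘ (minpoly R a).map (algebraMap R S)).coeff) = ⊤ := by
  have hcoeff : (minpolyDiv R a ^ (n + 1) %ₘ (minpoly R a).map (algebraMap R S)).coeff =
      fun l => aeval a (derivative (minpoly R a)) ^ n * (minpolyDiv R a).coeff l := by
    ext l
    rw [minpolyDiv_pow_succ_modByMonic ha, coeff_C_mul]
  rw [hcoeff]
  refine span_range_const_mul_eq_top (hunit.pow n) ?_
  rw [span_coeff_minpolyDiv ha, hadjoin, Algebra.top_toSubmodule]

variable {P : R[X]}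

lemma minpoly_root_of_monic (hP : P.Monic) : minpoly R (AdjoinRoot.root P) = P := by
  have hdvd : P ∣ minpoly R (AdjoinRoot.root P) := by
    rw [← AdjoinRoot.mk_eq_zero, ← AdjoinRoot.aeval_eq, minpoly.aeval]
  have hmin : degree (minpoly R (AdjoinRoot.root P)) ≤ degree P :=
    minpoly.min R _ hP (by rw [AdjoinRoot.aeval_eq, AdjoinRoot.mk_self])
  exact eq_of_monic_of_dvd_of_natDegree_le hP (minpoly.monic (AdjoinRoot.isIntegral_root' hP)) hdvd
    (natDegree_le_natDegree hmin)

lemma map_mk_eq_minpolyDiv (hP : P.Monic) {g : R[X][X]}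
    (hg : (C X - X) * g = C P - P.map C) :
    g.map (AdjoinRoot.mk P) = minpolyDiv R (AdjoinRoot.root P) := by
  have hmap : (C (AdjoinRoot.root P) - X) * g.map (AdjoinRoot.mk P) =
      -P.map (algebraMap R (AdjoinRoot P)) := by
    have hC : (AdjoinRoot.mk P).comp C = algebraMap R (AdjoinRoot P) := rfl
    simpa [map_map, hC] using congrArg (map (AdjoinRoot.mk P)) hg
  have hspec := minpolyDiv_spec R (AdjoinRoot.root P)
  rw [minpoly_root_of_monic hP] at hspec
  refine (monic_X_sub_C (AdjoinRoot.root P)).isRegular.right ?_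
  linear_combination -hmap - hspec

lemma span_range_coeff_pow_succ_modByMonic_eq_top [Nontrivial R] (hP : P.Monic)
    (hsep : P.Separable) {g : R[X][X]} (hg : (C X - X) * g = C P - P.map C) (n : ℕ) :
    Submodule.span R (Set.range fun l : Fin P.natDegree =>
      AdjoinRoot.mk P ((g ^ (n + 1) %ₘ P.map C).coeff l)) = ⊤ := by
  have hmap : (g ^ (n + 1) %ₘ P.map C).map (AdjoinRoot.mk P) =
      minpolyDiv R (AdjoinRoot.root P) ^ (n + 1) %ₘ
        (minpoly R (AdjoinRoot.root P)).map (algebraMap R (AdjoinRoot P)) := by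
    rw [map_modByMonic _ (hP.map C), Polynomial.map_pow, map_mk_eq_minpolyDiv hP hg, map_map,
      minpoly_root_of_monic hP]
    rfl
  have hdeg : ((g ^ (n + 1) %ₘ P.map C).map (AdjoinRoot.mk P)).degree < P.natDegree := by
    simpa only [hP.natDegree_map] using degree_map_modByMonic_lt _ _ (hP.map C)
  simp only [← coeff_map]
  rw [span_range_fin_coeff R hdeg, hmap]
  refine span_range_coeff_minpolyDiv_pow_succ_modByMonic_eq_top (AdjoinRoot.isIntegral_root' hP)
    AdjoinRoot.adjoinRoot_eq_top ?_ n
  rw [minpoly_root_of_monic hP]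
  exact isUnit_aeval_derivative_of_separable hsep (by rw [AdjoinRoot.aeval_eq, AdjoinRoot.mk_self])

theorem stmt10_general (hP : P.Monic) (hsep : P.Separable) {g : R[X][X]}
    (hg : (C X - X) * g = C P - P.map C) (n : ℕ) :
    LinearIndependent R (fun l : Fin P.natDegree =>
      Ideal.Quotient.mk (Ideal.span {P}) ((g ^ (n + 1) %ₘ P.map C).coeff l)) ∧
    Submodule.span R (Set.range fun l : Fin P.natDegree =>
      Ideal.Quotient.mk (Ideal.span {P}) ((g ^ (n + 1) %ₘ P.map C).coeff l)) = ⊤ := by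
  obtain _ | _ := subsingleton_or_nontrivial R
  · have := Module.subsingleton R (R[X] ⧸ Ideal.span {P})
    exact ⟨linearIndependent_of_subsingleton, Subsingleton.elim _ _⟩
  have hspan := span_range_coeff_pow_succ_modByMonic_eq_top hP hsep hg n
  refine ⟨linearIndependent_of_top_le_span_of_card_eq_finrank hspan.ge ?_, hspan⟩
  rw [Fintype.card_fin, finrank_quotient_span_eq_natDegree' hP]

end

/-- Let `P ∈ F_q[θ]` be monic irreducible of degree `d` and `n ≥ 0`.
Let `g ∈ (F_q[θ])[T]` be the unique polynomial with `(θ - T) * g = P(θ) - P(T)`, and let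
`r` be the remainder of `g^(n+1)` upon division by the `T`-monic polynomial `P(T)`.
Then the images in `F_q[θ]/(P)` of the `T`-coefficients `r.coeff 0, …, r.coeff (d-1)` form
an `F_q`-basis of `F_q[θ]/(P)`. -/
theorem stmt10 (p e : ℕ) [Fact p.Prime] (he : e ≠ 0)
    (d n : ℕ) (P : Polynomial (GaloisField p e))
    (hmonic : P.Monic) (hirr : Irreducible P) (hdeg : P.natDegree = d)
    (g : Polynomial (Polynomial (GaloisField p e)))
    (hg : (Polynomial.C (Polynomial.X : Polynomial (GaloisField p e)) -
          (Polynomial.X : Polynomial (Polynomial (GaloisField p e)))) * g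
        = Polynomial.C P -
          P.map (Polynomial.C : GaloisField p e →+* Polynomial (GaloisField p e)))
    (r : Polynomial (Polynomial (GaloisField p e)))
    (hr : r = g ^ (n + 1) %ₘ
        P.map (Polynomial.C : GaloisField p e →+* Polynomial (GaloisField p e))) :
    LinearIndependent (GaloisField p e)
      (fun l : Fin d => Ideal.Quotient.mk (Ideal.span {P}) (r.coeff l)) ∧
    Submodule.span (GaloisField p e)
      (Set.range fun l : Fin d => Ideal.Quotient.mk (Ideal.span {P}) (r.coeff l)) = ⊤ := by
  subst hr hdeg
  exact stmt10_general hmonic (PerfectField.separable_of_irreducible hirr) hg n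
end

section
/- Let 𝔭 ∈ F_q[θ] be monic irreducible of degree d, n ≥ 0, let g ∈ (F_q[θ])[T] be the unique polynomial with (θ − T)·g = 𝔭(θ) − 𝔭(T), and let r_n be the remainder of g^{n+1} upon division by 𝔭(T). Let L be a field extension of F_q containing a root ζ of 𝔭. Then, evaluating the T-variable of r_n at ζ (giving an element r_n(θ, ζ) of L[θ]), one has (θ − ζ)^{n+1} · r_n(θ, ζ) = 𝔭(θ)^{n+1} in L[θ]; that is, r_n(θ, ζ) = (𝔭(θ)/(θ − ζ))^{n+1}. -/
/-!
Evaluation at `T = ζ` is a ring homomorphism `F_q[θ][T] → L[θ]` that kills `𝔭(T)`. It therefore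
does not distinguish `g ^ (n + 1)` from its remainder `r`, and it turns the identity
`(θ - T) * g = 𝔭(θ) - 𝔭(T)` into `(θ - ζ) * g(θ, ζ) = 𝔭(θ)`, whose `(n + 1)`-st power is the claim.
-/

section DividedDifference

open Polynomial

theorem map_mapRingHom_map_C {A B : Type*} [Semiring A] [Semiring B] (φ : A →+* B) (P : A[X]) :
    (P.map C).map (mapRingHom φ) = (P.map φ).map C := by
  rw [Polynomial.map_map, Polynomial.map_map, mapRingHom_comp_C]

variable {R S : Type*} [CommRing R] [CommRing S]

/-- `g ∈ R[θ][T]` is a divided difference of `P ∈ R[X]`, that is, a quotient of `P(θ) - P(T)` by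
`θ - T`. Here `θ` is the inner variable `C X` and `T` is the outer variable `X`. -/
def IsDividedDifference (P : R[X]) (g : R[X][X]) : Prop :=
  (C X - X) * g = C P - P.map C

namespace IsDividedDifference

theorem map {P : R[X]} {g : R[X][X]} (hg : IsDividedDifference P g) (φ : R →+* S) :
    IsDividedDifference (P.map φ) (g.map (mapRingHom φ)) := by
  simpa [IsDividedDifference, map_mapRingHom_map_C] using
    congrArg (Polynomial.map (mapRingHom φ)) hg

theorem X_sub_C_mul_eval {P : R[X]} {g : R[X][X]} (hg : IsDividedDifference P g) (a : R) :
    (X - C a) * g.eval (C a) = P - C (P.eval a) := by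
  simpa [eval_map_apply] using congrArg (eval (C a)) hg

theorem X_sub_C_mul_eval_of_isRoot {P : R[X]} {g : R[X][X]} (hg : IsDividedDifference P g)
    {a : R} (ha : P.IsRoot a) : (X - C a) * g.eval (C a) = P := by
  rw [hg.X_sub_C_mul_eval, ha, C_0, sub_zero]

end IsDividedDifference

theorem eval_C_eq_of_map_C_dvd_sub {P : R[X]} {f g : R[X][X]} (h : P.map C ∣ f - g)
    {a : R} (ha : P.IsRoot a) : f.eval (C a) = g.eval (C a) := by
  have root_map_C : (P.map C).IsRoot (C a) := ha.map
  simpa [sub_eq_zero] using root_map_C.dvd h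

theorem stmt12_general (φ : R →+* S) {P : R[X]} {g r : R[X][X]} (hg : IsDividedDifference P g)
    (m : ℕ) (hr : P.map C ∣ r - g ^ m) {ζ : S} (hζ : (P.map φ).IsRoot ζ) :
    (X - C ζ) ^ m * (r.map (mapRingHom φ)).eval (C ζ) = P.map φ ^ m := by
  have hr_map : (P.map φ).map C ∣ r.map (mapRingHom φ) - g.map (mapRingHom φ) ^ m := by
    simpa [map_mapRingHom_map_C] using Polynomial.map_dvd (mapRingHom φ) hr
  rw [eval_C_eq_of_map_C_dvd_sub hr_map hζ, eval_pow, ← mul_pow,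
    (hg.map φ).X_sub_C_mul_eval_of_isRoot hζ]

end DividedDifference

/-- With `P ∈ F_q[θ]` monic irreducible of degree `d`, `n ≥ 0`,
`g ∈ (F_q[θ])[T]` the unique polynomial with `(θ - T) * g = P(θ) - P(T)`, and `r` the
remainder of `g^(n+1)` modulo `P(T)`: if `L` is a field extension of `F_q` (via `φ`)
containing a root `ζ` of `P`, then evaluating the `T`-variable of `r` at `ζ` gives
`r(θ, ζ) ∈ L[θ]` with `(θ - ζ)^(n+1) * r(θ, ζ) = P(θ)^(n+1)` in `L[θ]`. -/
theorem stmt12 (p e : ℕ) [Fact p.Prime] (he : e ≠ 0)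
    (d n : ℕ) (P : Polynomial (GaloisField p e))
    (hmonic : P.Monic) (hirr : Irreducible P) (hdeg : P.natDegree = d)
    (g : Polynomial (Polynomial (GaloisField p e)))
    (hg : (Polynomial.C (Polynomial.X : Polynomial (GaloisField p e)) -
          (Polynomial.X : Polynomial (Polynomial (GaloisField p e)))) * g
        = Polynomial.C P -
          P.map (Polynomial.C : GaloisField p e →+* Polynomial (GaloisField p e)))
    (r : Polynomial (Polynomial (GaloisField p e)))
    (hr : r = g ^ (n + 1) %ₘ
        P.map (Polynomial.C : GaloisField p e →+* Polynomial (GaloisField p e)))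
    (L : Type*) [Field L] (φ : GaloisField p e →+* L)
    (ζ : L) (hζ : Polynomial.eval ζ (P.map φ) = 0) :
    (Polynomial.X - Polynomial.C ζ) ^ (n + 1)
        * Polynomial.eval (Polynomial.C ζ) (r.map (Polynomial.mapRingHom φ))
      = (P.map φ) ^ (n + 1) := by
  subst hr
  exact stmt12_general φ hg (n + 1) (Polynomial.dvd_modByMonic_sub _ _) hζ
end

section
/- Let K be a field complete with respect to a nontrivial nonarchimedean absolute value ‖·‖, let (c_i)_{i≥0} ⊆ K with c_i → 0, and let z ∈ K with ‖z‖ ≤ 1. If for every n ≥ 0 the value of the n-th hyperderivative at z vanishes, i.e. Σ'_{i≥n} C(i,n) c_i z^{i−n} = 0 for all n ≥ 0, then c_i = 0 for all i. Equivalently, the Taylor-expansion homomorphism D_z from the Tate algebra to K[[X]], h ↦ Σ_{n≥0} h^{(n)}(z) X^n, is injective. -/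
open Filter

/-!
For `z ≠ 0`, rescaling `c i` to `z ^ i • c i` reduces everything to the point `z = 1`; for `z = 0`
the `n`-th series is its leading term `c n`. At `z = 1`, let `U` be an open subgroup. The terms of
the convergent series `∑ c i` eventually lie in `U`. If `c i ∈ U` for all `i > n`, then the
vanishing of `∑ (i + n).choose n • c (i + n)`, whose leading term is `c n`, expresses `c n` as a
limit of elements of `U`, hence `c n ∈ U` because open subgroups are closed. Descending, all `c i`
lie in `U`; but the open subgroups of a Hausdorff nonarchimedean group intersect in zero.
-/

theorem forall_of_eventually_of_forall_gt {p : ℕ → Prop} (hp : ∀ᶠ i in atTop, p i)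
    (step : ∀ n, (∀ i, n < i → p i) → p n) (n : ℕ) : p n := by
  obtain ⟨N, hN⟩ := eventually_atTop.mp hp
  have descend : ∀ i, 0 ≤ i → p i :=
    Nat.decreasingInduction (motive := fun k _ => ∀ i, k ≤ i → p i)
      (fun k _ ih i hi => hi.eq_or_lt.elim (fun h => h ▸ step k ih) (ih i)) hN N.zero_le
  exact descend n n.zero_le

section NonarchimedeanAddGroup

variable {E : Type*} [AddCommGroup E] [TopologicalSpace E]

theorem mem_openAddSubgroup_of_hasSum [ContinuousAdd E] (U : OpenAddSubgroup E) {ι : Type*}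
    {f : ι → E} {a : E} (hf : HasSum f a) (hU : ∀ i, f i ∈ U) : a ∈ U :=
  U.isClosed.mem_of_tendsto hf (.of_forall fun _ => sum_mem fun i _ => hU i)

theorem mem_openAddSubgroup_of_hasSum_choose_nsmul [IsTopologicalAddGroup E]
    (U : OpenAddSubgroup E) {c : ℕ → E}
    (hc : ∀ n, HasSum (fun i => (i + n).choose n • c (i + n)) 0) (n : ℕ) : c n ∈ U := by
  have tendsto_zero : Tendsto c atTop (nhds 0) := by
    simpa using (hc 0).summable.tendsto_atTop_zero
  refine forall_of_eventually_of_forall_gt (tendsto_zero U.mem_nhds_zero) (fun n tail_mem => ?_) n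
  have tail_hasSum : HasSum (fun i => (i + 1 + n).choose n • c (i + 1 + n)) (-c n) := by
    simpa using (hasSum_nat_add_iff' 1).mpr (hc n)
  exact neg_mem_iff.mp <| mem_openAddSubgroup_of_hasSum U tail_hasSum fun i =>
    nsmul_mem (tail_mem _ (by lia)) _

theorem eq_zero_of_forall_mem_openAddSubgroup [NonarchimedeanAddGroup E] [T0Space E] {x : E}
    (hx : ∀ U : OpenAddSubgroup E, x ∈ U) : x = 0 := by
  by_contra hne
  obtain ⟨U, hU⟩ := NonarchimedeanAddGroup.is_nonarchimedean {x}ᶜ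
    (isOpen_compl_singleton.mem_nhds (Ne.symm hne))
  exact hU (hx U) rfl

theorem eq_zero_of_hasSum_choose_nsmul [NonarchimedeanAddGroup E] [T0Space E] {c : ℕ → E}
    (hc : ∀ n, HasSum (fun i => (i + n).choose n • c (i + n)) 0) (n : ℕ) : c n = 0 :=
  eq_zero_of_forall_mem_openAddSubgroup fun U => mem_openAddSubgroup_of_hasSum_choose_nsmul U hc n

end NonarchimedeanAddGroup

theorem summable_nsmul_pow_smul {R E : Type*} [SeminormedRing R] [NormOneClass R]
    [SeminormedAddCommGroup E] [IsUltrametricDist E] [CompleteSpace E] [Module R E]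
    [IsBoundedSMul R E] (m : ℕ → ℕ) {z : R} (hz : ‖z‖ ≤ 1) {c : ℕ → E}
    (hc : Tendsto c atTop (nhds 0)) : Summable fun i => m i • z ^ i • c i := by
  have norm_term_le (i : ℕ) : ‖m i • z ^ i • c i‖ ≤ ‖c i‖ :=
    calc ‖m i • z ^ i • c i‖ ≤ ‖z ^ i • c i‖ := IsUltrametricDist.norm_nsmul_le _ _
      _ ≤ ‖z ^ i‖ * ‖c i‖ := norm_smul_le _ _
      _ ≤ ‖c i‖ := mul_le_of_le_one_left (norm_nonneg _)
        ((norm_pow_le z i).trans (pow_le_one₀ (norm_nonneg z) hz))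
  apply NonarchimedeanAddGroup.summable_of_tendsto_cofinite_zero
  rw [Nat.cofinite_eq_atTop]
  exact squeeze_zero_norm norm_term_le (tendsto_zero_iff_norm_tendsto_zero.mp hc)

theorem stmt16_general {K E : Type*} [DivisionRing K] [AddCommGroup E] [Module K E]
    [TopologicalSpace E] [NonarchimedeanAddGroup E] [T0Space E] [ContinuousConstSMul K E]
    (c : ℕ → E) (z : K)
    (hvanish : ∀ n, HasSum (fun i => (i + n).choose n • z ^ i • c (i + n)) 0) :
    ∀ i, c i = 0 := by
  intro n
  rcases eq_or_ne z 0 with rfl | hz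
  · have leading_term : HasSum (fun i => (i + n).choose n • (0 : K) ^ i • c (i + n)) (c n) := by
      simpa using hasSum_single (f := fun i => (i + n).choose n • (0 : K) ^ i • c (i + n)) 0
        fun i hi => by simp [hi]
    exact leading_term.unique (hvanish n)
  · have rescaled (n : ℕ) : HasSum (fun i => (i + n).choose n • z ^ (i + n) • c (i + n)) 0 := by
      simpa only [smul_zero, smul_comm (z ^ n) (_ : ℕ), smul_smul, ← pow_add, add_comm n]
        using (hvanish n).const_smul (z ^ n)
    exact (smul_eq_zero_iff_right (pow_ne_zero n hz)).mp
      (eq_zero_of_hasSum_choose_nsmul (c := fun i => z ^ i • c i) rescaled n)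

/-- Let `K` be a field complete with respect to a nontrivial
nonarchimedean absolute value, `(c i)` a null sequence in `K` and `z ∈ K` with `‖z‖ ≤ 1`.
If the value at `z` of every hyperderivative vanishes, i.e.
`∑'_{i} C(i+n,n) c_{i+n} z^i = 0` for all `n ≥ 0`, then `c i = 0` for all `i`
(injectivity of the Taylor-expansion homomorphism on the Tate algebra). -/
theorem stmt16 (K : Type*) [NontriviallyNormedField K] [CompleteSpace K]
    [IsUltrametricDist K]
    (c : ℕ → K) (hc : Tendsto c atTop (nhds 0))
    (z : K) (hz : ‖z‖ ≤ 1)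
    (hvanish : ∀ n : ℕ, ∑' i : ℕ, ((i + n).choose n : K) * c (i + n) * z ^ i = 0) :
    ∀ i, c i = 0 :=
  stmt16_general c z fun n =>
    (summable_nsmul_pow_smul _ hz (hc.comp (tendsto_add_atTop_nat n))).hasSum_iff.mpr
      (by simpa [mul_assoc, mul_comm (z ^ _)] using hvanish n)
end
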